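/- arXiv:1603.09524 — 7 statements merged into one kernel-verified Lean document; each statement's English description precedes it below -/
import Mathlib

section
/- Kernel characterization of the self-pairing: assume l is prime, (α, β) ≠ (0, 0), and Q ∈ M with Q ≠ 0. Then for every P ∈ M, e(P, Q) = 0 if and only if there exists c : ZMod l with P = c • Q. -/
/-- The coordinate form of the self-pairing `e_{α,β}` on `E[l] ≅ Z_l ⊕ Z_l` with
generating pair `G = (1,0)`, `H = (0,1)` and `W = α • G + β • H = (α, β)`:
`e((r₁,s₁),(r₂,s₂)) = (r₁ * s₂ − r₂ * s₁) • W`. -/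
def selfPairing {l : ℕ} (α β : ZMod l) (A B : ZMod l × ZMod l) : ZMod l × ZMod l :=
  (A.1 * B.2 - B.1 * A.2) • ((α, β) : ZMod l × ZMod l)

/-- Kernel characterization: for `l` prime, `(α, β) ≠ (0,0)` and `Q ≠ 0`,
`e(P, Q) = 0` iff `P` is a scalar multiple of `Q`. -/
theorem selfPairing_eq_zero_iff {l : ℕ} (hl : Nat.Prime l) (α β : ZMod l)
    (hαβ : (α, β) ≠ ((0, 0) : ZMod l × ZMod l))
    (Q : ZMod l × ZMod l) (hQ : Q ≠ 0) (P : ZMod l × ZMod l) :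
    selfPairing α β P Q = 0 ↔ ∃ c : ZMod l, P = c • Q := by
  haveI : Fact l.Prime := ⟨hl⟩
  obtain ⟨a, b⟩ := Q
  obtain ⟨x, y⟩ := P
  constructor
  · intro h
    have hd : x * b - a * y = 0 := (smul_eq_zero.mp h).resolve_right hαβ
    by_cases ha : a = 0
    · have hb : b ≠ 0 := fun hb => hQ (by rw [ha, hb]; rfl)
      have hx : x = 0 := by
        rw [ha, zero_mul, sub_zero] at hd
        exact (mul_eq_zero.mp hd).resolve_right hb
      refine ⟨y / b, Prod.ext ?_ ?_⟩
      · simp [ha, hx]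
      · simp [hb]
    · refine ⟨x / a, Prod.ext ?_ ?_⟩
      · simp [ha]
      · change y = x / a * b
        field_simp
        linear_combination -hd
  · rintro ⟨c, h⟩
    have h1 : x = c * a := congrArg Prod.fst h
    have h2 : y = c * b := congrArg Prod.snd h
    have hd : x * b - a * y = 0 := by rw [h1, h2]; ring
    change (x * b - a * y) • _ = _
    rw [hd, zero_smul]
end

section
/- Characterization of shares passing verification (precise content of Theorem 2): assume l is prime, (α, β) ≠ (0, 0), and Q ∈ M with Q ≠ 0. Then for all P, P' ∈ M, e(P', Q) = e(P, Q) if and only if there exists c : ZMod l with P' = P + c • Q. In particular, a submitted share P' passes the verification test against the published code V = e(P, Q) exactly when it differs from the true share P by a multiple of the public point Q. -/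
/-- Theorem 2 (precise content): for `l` prime, `(α, β) ≠ (0,0)` and `Q ≠ 0`,
a submitted share `P'` passes verification against the code `V = e(P, Q)`, i.e.
`e(P', Q) = e(P, Q)`, iff `P'` differs from `P` by a multiple of `Q`. -/
theorem selfPairing_verification_iff {l : ℕ} (hl : Nat.Prime l) (α β : ZMod l)
    (hαβ : (α, β) ≠ ((0, 0) : ZMod l × ZMod l))
    (Q : ZMod l × ZMod l) (hQ : Q ≠ 0) (P P' : ZMod l × ZMod l) :
    selfPairing α β P' Q = selfPairing α β P Q ↔ ∃ c : ZMod l, P' = P + c • Q := by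
  haveI : Fact l.Prime := ⟨hl⟩
  obtain ⟨q1, q2⟩ := Q
  obtain ⟨p1, p2⟩ := P
  obtain ⟨r1, r2⟩ := P'
  simp only [selfPairing, Prod.smul_mk, smul_eq_mul, Prod.mk.injEq, Prod.mk_add_mk]
  constructor
  · rintro ⟨h1, h2⟩
    have key : (r1 - p1) * q2 = q1 * (r2 - p2) := by
      by_cases ha : α = 0
      · have hb : β ≠ 0 := fun hb => hαβ (by rw [ha, hb])
        have := mul_right_cancel₀ hb h2
        linear_combination this
      · have := mul_right_cancel₀ ha h1
        linear_combination this
    by_cases hq : q1 = 0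
    · have hq2 : q2 ≠ 0 := fun h => hQ (by rw [hq, h]; rfl)
      refine ⟨(r2 - p2) / q2, ?_, ?_⟩
      · have h0 : (r1 - p1) * q2 = 0 := by rw [key, hq, zero_mul]
        have h3 := (mul_eq_zero.mp h0).resolve_right hq2
        rw [hq, mul_zero, add_zero]
        exact sub_eq_zero.mp h3
      · rw [div_mul_cancel₀ _ hq2]; ring
    · refine ⟨(r1 - p1) / q1, ?_, ?_⟩
      · rw [div_mul_cancel₀ _ hq]; ring
      · rw [div_mul_eq_mul_div, key, mul_div_cancel_left₀ _ hq]; ring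
  · rintro ⟨c, rfl, rfl⟩
    constructor <;> ring
end

section
/- Counting shares that pass verification: assume l is prime, (α, β) ≠ (0, 0), and Q ∈ M with Q ≠ 0. Then for every P ∈ M, the set of P' ∈ M with e(P', Q) = e(P, Q) has exactly l elements (out of l² elements of M); hence a uniformly random guess passes the verification test with probability 1/l. -/
/-- Counting shares that pass verification: for `l` prime, `(α, β) ≠ (0,0)` and
`Q ≠ 0`, exactly `l` of the `l²` elements `P'` of `M` satisfy
`e(P', Q) = e(P, Q)`; hence a uniformly random guess passes with probability `1/l`. -/
theorem card_selfPairing_fiber {l : ℕ} (hl : Nat.Prime l) (α β : ZMod l)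
    (hαβ : (α, β) ≠ ((0, 0) : ZMod l × ZMod l))
    (Q : ZMod l × ZMod l) (hQ : Q ≠ 0) (P : ZMod l × ZMod l) :
    Nat.card {P' : ZMod l × ZMod l // selfPairing α β P' Q = selfPairing α β P Q} = l := by
  haveI : Fact l.Prime := ⟨hl⟩
  have key : Function.Bijective (fun t : ZMod l =>
      (⟨(P.1 + t * Q.1, P.2 + t * Q.2), by
        unfold selfPairing
        congr 1
        ring⟩ :
        {P' : ZMod l × ZMod l // selfPairing α β P' Q = selfPairing α β P Q})) := by
    obtain ⟨a, b⟩ := Q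
    obtain ⟨p, q⟩ := P
    have hab : a ≠ 0 ∨ b ≠ 0 := by
      by_contra! h
      exact hQ (Prod.ext h.1 h.2)
    constructor
    · intro t u h
      have h' := congrArg Subtype.val h
      simp only [Prod.mk.injEq, add_right_inj] at h'
      rcases hab with ha | hb
      · exact mul_right_cancel₀ ha h'.1
      · exact mul_right_cancel₀ hb h'.2
    · rintro ⟨⟨x, y⟩, h⟩
      unfold selfPairing at h
      have h2 : x * b - a * y = p * b - a * q := smul_left_injective _ hαβ h
      rcases hab with ha | hb
      · refine ⟨(x - p) / a, Subtype.ext (Prod.ext ?_ ?_)⟩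
        · simp only
          field_simp
          ring
        · simp only
          field_simp
          linear_combination h2
      · refine ⟨(y - q) / b, Subtype.ext (Prod.ext ?_ ?_)⟩
        · simp only
          field_simp
          linear_combination -h2
        · simp only
          field_simp
          ring
  rw [← Nat.card_eq_of_bijective _ key, Nat.card_zmod]
end

section
/- Range of the verification map (content underlying Theorem 3, that the code V_i = e(P_i, Q) reveals nothing beyond membership in an l-element fiber): assume l is prime and Q ∈ M with Q ≠ 0. Then for every V ∈ M, there exists P ∈ M with e(P, Q) = V if and only if there exists c : ZMod l with V = c • W. In particular the image of the map P ↦ e(P, Q) is exactly the cyclic submodule generated by W. -/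
/-- Range of the verification map: for `l` prime and `Q ≠ 0`, a value `V` is of
the form `e(P, Q)` for some `P` iff `V` is a scalar multiple of `W = (α, β)`;
i.e. the image of `P ↦ e(P, Q)` is exactly the cyclic submodule generated by `W`. -/
theorem selfPairing_range {l : ℕ} (hl : Nat.Prime l) (α β : ZMod l)
    (Q : ZMod l × ZMod l) (hQ : Q ≠ 0) (V : ZMod l × ZMod l) :
    (∃ P : ZMod l × ZMod l, selfPairing α β P Q = V) ↔
      ∃ c : ZMod l, V = c • ((α, β) : ZMod l × ZMod l) := by
  haveI : Fact l.Prime := ⟨hl⟩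
  constructor
  · rintro ⟨P, rfl⟩
    exact ⟨_, rfl⟩
  · rintro ⟨c, rfl⟩
    obtain ⟨q1, q2⟩ := Q
    by_cases h : q2 = 0
    · have h1 : q1 ≠ 0 := by
        rintro rfl
        exact hQ (by rw [h]; rfl)
      refine ⟨(0, -(c / q1)), ?_⟩
      have : (0 : ZMod l) * q2 - q1 * -(c / q1) = c := by
        field_simp
        ring
      simp only [selfPairing, this]
    · refine ⟨(c / q2, 0), ?_⟩
      have : c / q2 * q2 - q1 * 0 = c := by
        field_simp
        ring
      simp only [selfPairing, this]
end

section
/- Correctness of Liu-type reconstruction of the masking point: let l be a prime, t a positive integer with t ≤ l, and let V be the t × t matrix over ZMod l with entries V_{k,j} = (k+1)^j for k, j ∈ Fin t. Given a', b' : Fin t → ZMod l, define a_k = ∑_j V_{k,j} · a'_j and b_k = ∑_j V_{k,j} · b'_j, and set P_k := a_k • G + b_k • H and P'_i := a'_i • G + b'_i • H. Then for every Q ∈ M and every i ∈ Fin t, ∑_k (V⁻¹)_{i,k} • e(Q, P_k) = e(Q, P'_i); that is, combining the pseudo-shares e(Q, P_k) with the i-th row of V⁻¹ recovers the masking value e(Q,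 P'_i). -/
/-- Correctness of Liu-type reconstruction of the masking point: with the
Vandermonde matrix `V`, shares `a = V a'`, `b = V b'`, share points
`P_k = a_k • G + b_k • H` and `P'_i = a'_i • G + b'_i • H`, combining the
pseudo-shares `e(Q, P_k)` with the `i`-th row of `V⁻¹` recovers `e(Q, P'_i)`. -/
theorem liu_reconstruction {l t : ℕ} (hl : Nat.Prime l) (ht : 0 < t) (htl : t ≤ l)
    (α β : ZMod l)
    (V : Matrix (Fin t) (Fin t) (ZMod l))
    (hV : V = Matrix.of fun k j : Fin t => (((k : ℕ) + 1 : ℕ) : ZMod l) ^ (j : ℕ))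
    (a' b' : Fin t → ZMod l)
    (a b : Fin t → ZMod l)
    (ha : ∀ k, a k = ∑ j, V k j * a' j)
    (hb : ∀ k, b k = ∑ j, V k j * b' j)
    (P P' : Fin t → ZMod l × ZMod l)
    (hP : ∀ k, P k = a k • ((1, 0) : ZMod l × ZMod l) + b k • ((0, 1) : ZMod l × ZMod l))
    (hP' : ∀ i, P' i = a' i • ((1, 0) : ZMod l × ZMod l) + b' i • ((0, 1) : ZMod l × ZMod l))
    (Q : ZMod l × ZMod l) (i : Fin t) :
    ∑ k, (V⁻¹) i k • selfPairing α β Q (P k) = selfPairing α β Q (P' i) := by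
  haveI : Fact l.Prime := ⟨hl⟩
  have hdet : IsUnit V.det := by
    have hV2 : V = Matrix.vandermonde (fun k : Fin t => (((k : ℕ) + 1 : ℕ) : ZMod l)) := by
      rw [hV]; rfl
    rw [hV2, isUnit_iff_ne_zero, Matrix.det_vandermonde_ne_zero_iff]
    intro x y hxy
    have h1 : ((x : ℕ) : ZMod l) = ((y : ℕ) : ZMod l) := by
      simpa using hxy
    rw [ZMod.natCast_eq_natCast_iff] at h1
    exact Fin.ext (Nat.ModEq.eq_of_lt_of_lt h1 (x.2.trans_le htl) (y.2.trans_le htl))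
  have key : ∀ c' c : Fin t → ZMod l, (∀ k, c k = ∑ j, V k j * c' j) →
      ∑ k, V⁻¹ i k * c k = c' i := by
    intro c' c hc
    have h1 : c = V.mulVec c' := funext hc
    have h2 : V⁻¹.mulVec c = c' := by
      rw [h1, Matrix.mulVec_mulVec, Matrix.nonsing_inv_mul _ hdet, Matrix.one_mulVec]
    exact congrFun h2 i
  have e : ∀ k, V⁻¹ i k • selfPairing α β Q (P k) =
      (Q.1 * (V⁻¹ i k * b k) - (V⁻¹ i k * a k) * Q.2) • ((α, β) : ZMod l × ZMod l) := by
    intro k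
    rw [hP k, selfPairing, smul_smul]
    congr 1
    simp
    ring
  rw [Finset.sum_congr rfl (fun k _ => e k), ← Finset.sum_smul, Finset.sum_sub_distrib,
    ← Finset.mul_sum, ← Finset.sum_mul, key b' b hb, key a' a ha, hP' i, selfPairing]
  simp
end

section
/- Secrecy of the hidden point against t−1 colluders (precise content of Theorem 4): let l be a prime, t ≥ 2, and let x : Fin (t−1) → ZMod l be an injective family of nonzero evaluation points with values s : Fin (t−1) → ZMod l, arising from some polynomial of degree < t. Then the set of pairs (f.coeff 0, f.coeff (t−1)), as f ranges over all polynomials over ZMod l of degree < t satisfying f(x_j) = s_j for all j, has exactly l elements. Hence t−1 shares leave exactly l equally consistent candidates for the pair (a_0, b_0) determining P_0 = a_0 • G + b_0 • H, and the colluders can do no better than guess with probability 1/l. -/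
/-- Theorem 4 (precise content): secrecy of the hidden point against `t − 1`
colluders.  For `l` prime and `t ≥ 2`, given `t − 1` shares `(x_j, s_j)` at
injective nonzero nodes arising from some polynomial of degree `< t`, the set of
pairs `(f.coeff 0, f.coeff (t−1))`, as `f` ranges over all polynomials of degree
`< t` consistent with the shares, has exactly `l` elements; so the colluders can
only guess the pair `(a₀, b₀)` determining `P₀` with probability `1/l`. -/
theorem card_consistent_secret_pairs {l t : ℕ} (hl : Nat.Prime l) (ht : 2 ≤ t)
    (x : Fin (t - 1) → ZMod l) (hx : Function.Injective x)
    (hx0 : ∀ j, x j ≠ 0)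
    (s : Fin (t - 1) → ZMod l)
    (hex : ∃ f : Polynomial (ZMod l), f.degree < (t : ℕ) ∧ ∀ j, f.eval (x j) = s j) :
    Nat.card {p : ZMod l × ZMod l //
        ∃ f : Polynomial (ZMod l), f.degree < (t : ℕ) ∧ (∀ j, f.eval (x j) = s j) ∧
          p = (f.coeff 0, f.coeff (t - 1))} = l := by
  have : Fact l.Prime := ⟨hl⟩
  obtain ⟨f₀, hd₀, he₀⟩ := hex
  let φ : {p : ZMod l × ZMod l //
        ∃ f : Polynomial (ZMod l), f.degree < (t : ℕ) ∧ (∀ j, f.eval (x j) = s j) ∧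
          p = (f.coeff 0, f.coeff (t - 1))} → ZMod l := fun p => p.1.2
  have hφ : Function.Bijective φ := by
    constructor
    · rintro ⟨p, f, hf, hfe, rfl⟩ ⟨q, g, hg, hge, rfl⟩ h
      have h' : f.coeff (t - 1) = g.coeff (t - 1) := h
      have hfg : f = g := by
        refine Polynomial.eq_of_degree_sub_lt_of_eval_index_eq (v := x) Finset.univ
          hx.injOn ?_ (fun j _ => by rw [hfe, hge])
        rw [Finset.card_univ, Fintype.card_fin, Polynomial.degree_lt_iff_coeff_zero]
        intro m hm
        rw [Polynomial.coeff_sub]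
        rcases Nat.eq_or_lt_of_le hm with h1 | h1
        · rw [← h1, h', sub_self]
        · have hm' : t ≤ m := by omega
          rw [(Polynomial.degree_lt_iff_coeff_zero f t).1 hf m hm',
            (Polynomial.degree_lt_iff_coeff_zero g t).1 hg m hm', sub_self]
      subst hfg
      rfl
    · intro b
      let W : Polynomial (ZMod l) := ∏ j, (Polynomial.X - Polynomial.C (x j))
      have hWm : W.Monic := Polynomial.monic_prod_of_monic _ _
        (fun j _ => Polynomial.monic_X_sub_C (x j))
      have hWn : W.natDegree = t - 1 := by
        simp [W, Polynomial.natDegree_prod_of_monic, Polynomial.monic_X_sub_C]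
      have hWc : W.coeff (t - 1) = 1 := by rw [← hWn]; exact hWm
      have hWe : ∀ j, W.eval (x j) = 0 := by
        intro j
        rw [Polynomial.eval_prod]
        exact Finset.prod_eq_zero (Finset.mem_univ j) (by simp)
      let f := f₀ + Polynomial.C (b - f₀.coeff (t - 1)) * W
      refine ⟨⟨(f.coeff 0, f.coeff (t - 1)), f, ?_, ?_, rfl⟩, ?_⟩
      · rw [Polynomial.degree_lt_iff_coeff_zero]
        intro m hm
        have h1 := (Polynomial.degree_lt_iff_coeff_zero f₀ t).1 hd₀ m hm
        have h2 : W.coeff m = 0 := Polynomial.coeff_eq_zero_of_natDegree_lt (by omega)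
        simp only [f, Polynomial.coeff_add, Polynomial.coeff_C_mul, h1, h2, mul_zero, add_zero]
      · intro j
        simp only [f, Polynomial.eval_add, Polynomial.eval_mul, hWe, he₀, mul_zero, add_zero]
      · change f.coeff (t - 1) = b
        simp only [f, Polynomial.coeff_add, Polynomial.coeff_C_mul, hWc]
        ring
  rw [Nat.card_congr (Equiv.ofBijective φ hφ), Nat.card_zmod]
end

section
/- Correctness of the proposed multi-secret reconstruction: let l be a prime, t ≥ 1, f a polynomial over ZMod l of degree < t, and x : Fin t → ZMod l an injective family of nodes with shares S_j := f(x_j). Set P_0 := (f.coeff 0) • G + (f.coeff (t−1)) • H, let K : Fin m → M be the secrets, and let the published recovery codes be R_i := K_i − e(P_0, ((i : ℕ)+1) • P_0). If g denotes the Lagrange interpolation polynomial of the t points (x_j, S_j) and P_0' := (g.coeff 0) • G + (g.coeff (t−1)) • H, then P_0' = P_0 and R_i + e(P_0', ((i : ℕ)+1) • P_0') = K_i for every i ∈ Fin m; that is, any t participants jointly recover all m secrets. -/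
/-- Correctness of the proposed multi-secret reconstruction: any `t` participants,
interpolating their shares `(x_j, f(x_j))` by the Lagrange polynomial `g`, recover
the secret point `P₀ = (f.coeff 0) • G + (f.coeff (t−1)) • H` and hence all `m`
secrets from the published recovery codes `R_i = K_i − e(P₀, (i+1) • P₀)`. -/
theorem proposed_scheme_reconstruction {l : ℕ} [Fact (Nat.Prime l)]
    {t m : ℕ} (ht : 1 ≤ t) (α β : ZMod l)
    (f : Polynomial (ZMod l)) (hf : f.degree < (t : ℕ))
    (x : Fin t → ZMod l) (hx : Function.Injective x)
    (S : Fin t → ZMod l) (hS : ∀ j, S j = f.eval (x j))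
    (P₀ : ZMod l × ZMod l)
    (hP₀ : P₀ = (f.coeff 0) • ((1, 0) : ZMod l × ZMod l) +
      (f.coeff (t - 1)) • ((0, 1) : ZMod l × ZMod l))
    (K : Fin m → ZMod l × ZMod l)
    (R : Fin m → ZMod l × ZMod l)
    (hR : ∀ i, R i = K i - selfPairing α β P₀ (((i : ℕ) + 1) • P₀))
    (g : Polynomial (ZMod l))
    (hg : g = Lagrange.interpolate Finset.univ x S)
    (P₀' : ZMod l × ZMod l)
    (hP₀' : P₀' = (g.coeff 0) • ((1, 0) : ZMod l × ZMod l) +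
      (g.coeff (t - 1)) • ((0, 1) : ZMod l × ZMod l)) :
    P₀' = P₀ ∧ ∀ i, R i + selfPairing α β P₀' (((i : ℕ) + 1) • P₀') = K i := by
  have hgf : g = f := by
    rw [hg]
    refine (Lagrange.eq_interpolate_of_eval_eq _ hx.injOn ?_ fun j _ => (hS j).symm).symm
    simpa using hf
  have hP : P₀' = P₀ := by rw [hP₀', hP₀, hgf]
  refine ⟨hP, fun i => ?_⟩
  rw [hR, hP, sub_add_cancel]
end
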